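/- Let 1 ≤ i ≤ j ≤ n and let w be in B_n with w(i) ≻ -w(j) (so that right multiplication by the reflection (i,-j) strictly decreases length). Then l_+(w) + l^{ij}_-(w) = (1/2)(l(w) - l(w(i,-j)) - 1) + l_+(w(i,-j)) + l^{ij}_-(w(i,-j)). -/

import Mathlib

/-!
Clearing the factor `1/2`, the identity says that the signed count
`F(w) = ℓ₊(w) + 2 ℓ^{ij}_-(w) - ℓ_-(w)`, in which a pair `(k,-l)` counts `+1` if it precedes
`(i,-j)` in `Φ` and `-1` otherwise, satisfies `F(w(i,-j)) = F(w) + 1`.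

Put `a = w(i)`, `b = w(j)`, so that `w(i,-j)` has `-b` and `-a` in positions `i` and `j`.
Pairs of positions avoiding `i` and `j` contribute equally to both sides. For a fixed position
`m ≠ i, j`, the total contribution of the pairs joining `m` to `i` or `j` is also unchanged: this
follows from the symmetry `x ≺ y ↔ -y ≺ -x` and the totality of `≺`, separately for `m < i`,
`i < m < j` and `j < m`. The pairs with both positions in `{i, j}` account for the difference `1`,
which comes from `(i,-j)` itself because `a ≻ -b` whereas `-b ⊁ a`.

The lemmas use 0-based positions `I = i - 1` and `J = j - 1`. The pairwise comparison is
`signed_count_refl`, and `signed_count` writes `F` as a sum over pairs.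
-/

open scoped BigOperators

namespace HL

/-! ### The order `≺` on nonzero integers in `[-n,n]`:
`1 ≺ 2 ≺ ... ≺ n ≺ -n ≺ -(n-1) ≺ ... ≺ -1`. -/

def slt (a b : ℤ) : Prop :=
  (0 < a ∧ b < 0) ∨ (0 < a ∧ 0 < b ∧ a < b) ∨ (a < 0 ∧ b < 0 ∧ a < b)

instance slt.dec (a b : ℤ) : Decidable (slt a b) := by unfold slt; infer_instance

def sle (a b : ℤ) : Prop := slt a b ∨ a = b

instance sle.dec (a b : ℤ) : Decidable (sle a b) := by unfold sle; infer_instance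

/-! ### Signed permutations (windows), reflections acting on the right -/

/-- The right action of a reflection on a window (or column), with 1-based
positions.  The reflection `(i, j)` with `j > 0` transposes positions `i` and
`j`; the reflection `(i, -j)` (i.e. `(i,\bar\jmath)`) with `i ≠ j` transposes
positions `i, j` and negates both entries; `(i, -i)` negates position `i`. -/
def applyRefl (l : List ℤ) (t : ℕ × ℤ) : List ℤ :=
  if 0 < t.2 then
    (l.set (t.1 - 1) (l.getD (t.2.toNat - 1) 0)).set (t.2.toNat - 1) (l.getD (t.1 - 1) 0)
  else
    if t.1 = (-t.2).toNat then l.set (t.1 - 1) (-(l.getD (t.1 - 1) 0))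
    else (l.set (t.1 - 1) (-(l.getD ((-t.2).toNat - 1) 0))).set ((-t.2).toNat - 1)
          (-(l.getD (t.1 - 1) 0))

def applyAll (w : List ℤ) (T : List (ℕ × ℤ)) : List ℤ := T.foldl applyRefl w

/-- The word `w[i,j] = w(i) w(i+1) ... w(j)`, 1-based and inclusive. -/
def word (l : List ℤ) (i j : ℕ) : List ℤ := (l.drop (i - 1)).take (j + 1 - i)

/-- `N_{ab}(u)` = number of letters `c` of the word `u` with `a ≺ c ≺ b`. -/
def Nab (a b : ℤ) (u : List ℤ) : ℕ :=
  (u.filter (fun c => decide (slt a c ∧ slt c b))).length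

/-- `ℓ₊(w) = #{(k,l) : k < l, w(k) ≻ w(l)}`. -/
def lplus (l : List ℤ) : ℕ :=
  (((Finset.range l.length) ×ˢ (Finset.range l.length)).filter
    (fun p => p.1 < p.2 ∧ slt (l.getD p.2 0) (l.getD p.1 0))).card

/-- `ℓ₋(w) = #{(k,l) : k ≤ l, w(k) ≻ -w(l)}`. -/
def lminus (l : List ℤ) : ℕ :=
  (((Finset.range l.length) ×ˢ (Finset.range l.length)).filter
    (fun p => p.1 ≤ p.2 ∧ slt (-(l.getD p.2 0)) (l.getD p.1 0))).card

/-- The Coxeter length of a signed permutation given by its window. -/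
def len (l : List ℤ) : ℕ := lplus l + lminus l

/-- The (finite) set of windows of all signed permutations in `B_n`. -/
def allWindows (n : ℕ) : Finset (List ℤ) :=
  Finset.image (fun w : Equiv.Perm (Fin n) × (Fin n → Bool) =>
    (List.finRange n).map (fun i =>
      if w.2 i then -(((w.1 i : ℕ) : ℤ) + 1) else ((w.1 i : ℕ) : ℤ) + 1)) Finset.univ

/-- `w`-admissibility of a sequence of reflections: a strictly decreasing
chain in Bruhat order (recorded via the length function). -/
def decChain : List ℤ → List (ℕ × ℤ) → Bool
  | _, [] => true
  | w, t :: ts => (decide (len (applyRefl w t) < len w)) && decChain (applyRefl w t) ts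

/-- Increasing-admissibility: a strictly increasing chain. -/
def incChain : List ℤ → List (ℕ × ℤ) → Bool
  | _, [] => true
  | w, t :: ts => (decide (len w < len (applyRefl w t))) && incChain (applyRefl w t) ts

/-- The subsequence of a chain `Γ` selected by a set `J` of (0-based) positions. -/
def selChain (Γ : List (ℕ × ℤ)) (J : Finset ℕ) : List (ℕ × ℤ) :=
  (J.sort (· ≤ ·)).map (fun j => Γ.getD j (0, 0))

/-! ### The `λ`-chain of type `C_n` -/

/-- `Γ'_j = ((1,-j),(2,-j),...,(j-1,-j))`. -/
def gammaPrime (j : ℕ) : List (ℕ × ℤ) := (List.range (j - 1)).map (fun r => (r + 1, -(j : ℤ)))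

/-- `Γ_j(k) = ((1,-j),...,(j-1,-j),(j,-(k+1)),...,(j,-n),(j,-j),(j,n),...,(j,k+1))`. -/
def gammaJK (n j k : ℕ) : List (ℕ × ℤ) :=
  gammaPrime j
    ++ (List.range (n - k)).map (fun r => (j, -((k + 1 + r : ℕ) : ℤ)))
    ++ [(j, -(j : ℤ))]
    ++ (List.range (n - k)).map (fun r => (j, ((n - r : ℕ) : ℤ)))

/-- `Γ(k) = Γ'_2 ⋯ Γ'_k Γ_1(k) ⋯ Γ_k(k)` (type `C_n`). -/
def gammaChain (n k : ℕ) : List (ℕ × ℤ) :=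
  ((List.range (k - 1)).map (fun r => gammaPrime (r + 2))).flatten
    ++ ((List.range k).map (fun r => gammaJK n (r + 1) k)).flatten

/-- `λ'_i = #{j : λ_j ≥ i}`, the conjugate partition. -/
def conj (n : ℕ) (lam : Fin n → ℕ) (i : ℕ) : ℕ :=
  (Finset.univ.filter (fun j : Fin n => i ≤ lam j)).card

/-- `λ_1`, the largest part. -/
def lamOne (n : ℕ) (lam : Fin n → ℕ) : ℕ := Finset.univ.sup lam

/-- The fixed `λ`-chain `Γ = Γ^{λ_1} Γ^{λ_1-1} ⋯ Γ^1` with `Γ^i = Γ(λ'_i)`. -/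
def lambdaChain (n : ℕ) (lam : Fin n → ℕ) : List (ℕ × ℤ) :=
  ((List.range (lamOne n lam)).map
    (fun r => gammaChain n (conj n lam (lamOne n lam - r)))).flatten

/-- The set `A(λ)` of admissible pairs `(w, J)`. -/
def ASet (n : ℕ) (lam : Fin n → ℕ) : Set (List ℤ × Finset ℕ) :=
  {p | p.1 ∈ allWindows n ∧ p.2 ⊆ Finset.range (lambdaChain n lam).length ∧
    decChain p.1 (selChain (lambdaChain n lam) p.2) = true}

/-! ### Roots, coroots, affine reflections, and the weight `μ(T)` -/

/-- The root of type `C_n` corresponding to a symbol: `(i,j) ↦ ε_i - ε_j`,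
`(i,-j) ↦ ε_i + ε_j` for `i < j`, and `(i,-i) ↦ 2ε_i`. -/
def rootVec (n : ℕ) (β : ℕ × ℤ) : Fin n → ℤ := fun r =>
  (if ((r : ℕ) + 1 : ℤ) = (β.1 : ℤ) then 1 else 0) +
  (if 0 < β.2 then (if ((r : ℕ) + 1 : ℤ) = β.2 then -1 else 0)
   else (if ((r : ℕ) + 1 : ℤ) = -β.2 then 1 else 0))

/-- The coroot (type `C_n`): `(2ε_i)^∨ = ε_i`, the long rootss are unchanged. -/
def corootVec (n : ℕ) (β : ℕ × ℤ) : Fin n → ℤ :=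
  if β.2 = -(β.1 : ℤ) then (fun r => if ((r : ℕ) + 1 : ℤ) = (β.1 : ℤ) then 1 else 0)
  else rootVec n β

/-- Standard inner product on `ℤ^n`. -/
def ip (n : ℕ) (u v : Fin n → ℤ) : ℤ := ∑ r, u r * v r

/-- The affine reflection in the hyperplane `{v : ⟨v, β^∨⟩ = c}`. -/
def affRefl (n : ℕ) (β : ℕ × ℤ) (c : ℤ) (v : Fin n → ℤ) : Fin n → ℤ :=
  fun r => v r - (ip n v (corootVec n β) - c) * rootVec n β r

/-- `l_k = #{j ≤ k : β_j = β_k}` (here `k` is 0-based). -/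
def lCount (Γ : List (ℕ × ℤ)) (k : ℕ) : ℕ := (Γ.take (k + 1)).count (Γ.getD k (0, 0))

/-- `μ(J) = \hat r_{j_1} ⋯ \hat r_{j_s}(λ)` for `J = {j_1 < ... < j_s}`. -/
def muJ (n : ℕ) (Γ : List (ℕ × ℤ)) (lamVec : Fin n → ℤ) (J : Finset ℕ) : Fin n → ℤ :=
  (J.sort (· ≤ ·)).foldr (fun j v => affRefl n (Γ.getD j (0, 0)) ((lCount Γ j : ℕ) : ℤ) v) lamVec

/-- The linear action of a signed permutation (given by its window) on `ℤ^n`: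
`w(ε_i) = ε_{w(i)}` with `ε_{-i} = -ε_i`. -/
def wAct (n : ℕ) (w : List ℤ) (v : Fin n → ℤ) : Fin n → ℤ := fun r =>
  ∑ i : Fin n, ((if w.getD i 0 = ((r : ℕ) + 1 : ℤ) then v i else 0) +
    (if w.getD i 0 = -(((r : ℕ) + 1 : ℤ)) then -(v i) else 0))

def lamVec (n : ℕ) (lam : Fin n → ℕ) : Fin n → ℤ := fun i => (lam i : ℤ)

/-! ### Fillings of the doubled shape `\hat λ` -/

/-- A filling of the doubled shape, recorded by its primed columns `C'_{i,k}`
(`Cp i k`) and unprimed columns `C_{i,j}` (`Cu i j`). -/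
structure Filling where
  Cp : ℕ → ℕ → List ℤ
  Cu : ℕ → ℕ → List ℤ

def validP (n : ℕ) (lam : Fin n → ℕ) (i k : ℕ) : Prop :=
  1 ≤ i ∧ i ≤ lamOne n lam ∧ 2 ≤ k ∧ k ≤ conj n lam i

def validU (n : ℕ) (lam : Fin n → ℕ) (i j : ℕ) : Prop :=
  1 ≤ i ∧ i ≤ lamOne n lam ∧ 1 ≤ j ∧ j ≤ conj n lam i ∧ (i = 1 → j = 1)

instance validP.dec (n : ℕ) (lam : Fin n → ℕ) (i k : ℕ) : Decidable (validP n lam i k) := by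
  unfold validP; infer_instance

instance validU.dec (n : ℕ) (lam : Fin n → ℕ) (i j : ℕ) : Decidable (validU n lam i j) := by
  unfold validU; infer_instance

/-- The right neighbour `C'_{i,k+1}` of `C'_{i,k}`, with the convention
`C'_{i,λ'_i+1} = C_{i,1}`. -/
def CpNxt (n : ℕ) (lam : Fin n → ℕ) (F : Filling) (i k : ℕ) : List ℤ :=
  if k < conj n lam i then F.Cp i (k + 1) else F.Cu i 1

/-- The right neighbour `C_{i,j+1}` of `C_{i,j}`, with the conventions
`C_{i,λ'_i+1} = C'_{i-1,2}` (if `λ'_{i-1} > 1`) and `C_{i,λ'_i+1} = C_{i-1,1}`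
(if `λ'_{i-1} = 1`). -/
def CuNxt (n : ℕ) (lam : Fin n → ℕ) (F : Filling) (i j : ℕ) : List ℤ :=
  if j < conj n lam i then F.Cu i (j + 1)
  else if 2 ≤ conj n lam (i - 1) then F.Cp (i - 1) 2 else F.Cu (i - 1) 1

/-- No two entries `a, b` of a column with `a = ±b`. -/
def colDistinct (c : List ℤ) : Prop :=
  ∀ p q : ℕ, p < q → q < c.length →
    c.getD p 0 ≠ c.getD q 0 ∧ c.getD p 0 ≠ -(c.getD q 0)

/-- `R = (r_1 < r_2 < ... < r_p)` with `1 ≤ r_t < j ≤ d`. -/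
def sortedR (R : List ℕ) (j d : ℕ) : Prop :=
  List.Chain' (· < ·) R ∧ (∀ r ∈ R, 1 ≤ r ∧ r < j) ∧ 1 ≤ j ∧ j ≤ d

/-- `D (r_1,-j) (r_2,-j) ⋯ (r_p,-j)`. -/
def cycleApply (D : List ℤ) (R : List ℕ) (j : ℕ) : List ℤ :=
  R.foldl (fun E r => applyRefl E (r, -(j : ℤ))) D

/-- The relation between `C_{i,j+1}[1,λ'_i] = E` and `C_{i,j} = D` in a filling:
`E` differs from `D' = D(r_1,-j)⋯(r_p,-j)` only in position `j`,
`E(j) ∉ {±D'(r) : r ≠ j}` and `E(j) ⪯ D'(j)`. -/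
def unprimedTrans (D E : List ℤ) (R : List ℕ) (j d : ℕ) : Prop :=
  (∀ r, 1 ≤ r → r ≤ d → r ≠ j →
    E.getD (r - 1) 0 = (cycleApply D R j).getD (r - 1) 0) ∧
  (∀ r, 1 ≤ r → r ≤ d → r ≠ j →
    E.getD (j - 1) 0 ≠ (cycleApply D R j).getD (r - 1) 0 ∧
    E.getD (j - 1) 0 ≠ -((cycleApply D R j).getD (r - 1) 0)) ∧
  sle (E.getD (j - 1) 0) ((cycleApply D R j).getD (j - 1) 0)

/-- The set `F(λ)` of fillings of the doubled shape `\hat λ`. -/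
def FSet (n : ℕ) (lam : Fin n → ℕ) : Set Filling :=
  {F |
    -- shape
    (∀ i k, (validP n lam i k → (F.Cp i k).length = conj n lam i) ∧
      (¬ validP n lam i k → F.Cp i k = [])) ∧
    (∀ i j, (validU n lam i j → (F.Cu i j).length = conj n lam i) ∧
      (¬ validU n lam i j → F.Cu i j = [])) ∧
    -- entries lie in `{±1, ..., ±n}`
    (∀ i k, validP n lam i k → ∀ a ∈ F.Cp i k, 1 ≤ a.natAbs ∧ a.natAbs ≤ n) ∧
    (∀ i j, validU n lam i j → ∀ a ∈ F.Cu i j, 1 ≤ a.natAbs ∧ a.natAbs ≤ n) ∧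
    -- (1) rows weakly decrease from left to right
    (∀ i k, validP n lam i k → ∀ r, 1 ≤ r → r ≤ conj n lam i →
      sle ((CpNxt n lam F i k).getD (r - 1) 0) ((F.Cp i k).getD (r - 1) 0)) ∧
    (∀ i j, 2 ≤ i → validU n lam i j → ∀ r, 1 ≤ r → r ≤ conj n lam i →
      sle ((CuNxt n lam F i j).getD (r - 1) 0) ((F.Cu i j).getD (r - 1) 0)) ∧
    -- (2) no column contains `a, b` with `a = ±b`
    (∀ i k, validP n lam i k → colDistinct (F.Cp i k)) ∧
    (∀ i j, validU n lam i j → colDistinct (F.Cu i j)) ∧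
    -- (3) primed transitions: `C'_{i,k+1} = C'_{i,k}(r_1,-k)⋯(r_p,-k)`
    (∀ i k, validP n lam i k → ∃ R : List ℕ, sortedR R k (conj n lam i) ∧
      CpNxt n lam F i k = cycleApply (F.Cp i k) R k) ∧
    -- (3) unprimed transitions
    (∀ i j, 2 ≤ i → validU n lam i j → ∃ R : List ℕ, sortedR R j (conj n lam i) ∧
      unprimedTrans (F.Cu i j) ((CuNxt n lam F i j).take (conj n lam i)) R j (conj n lam i))}

/-! ### The filling map `f` -/

/-- Offset in `Γ` of the beginning of block `Γ^i` (the blocks are listed for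
`i = λ_1` down to `1`). -/
def offsetBlock (n : ℕ) (lam : Fin n → ℕ) (i : ℕ) : ℕ :=
  ∑ r ∈ Finset.Ico (i + 1) (lamOne n lam + 1), (gammaChain n (conj n lam r)).length

/-- Offset in `Γ` of the beginning of the factor `Γ'_{i,k}`.-/
def offsetP (n : ℕ) (lam : Fin n → ℕ) (i k : ℕ) : ℕ :=
  offsetBlock n lam i + ∑ j ∈ Finset.Ico 2 k, (gammaPrime j).length

/-- Offset in `Γ` of the beginning of the factor `Γ_{i,j}`.-/
def offsetU (n : ℕ) (lam : Fin n → ℕ) (i j : ℕ) : ℕ :=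
  offsetBlock n lam i + (∑ k ∈ Finset.Ico 2 (conj n lam i + 1), (gammaPrime k).length)
    + ∑ j' ∈ Finset.Ico 1 j, (gammaJK n j' (conj n lam i)).length

/-- `π = w ⋅ (all selected reflections at positions < off)`. -/
def piW (n : ℕ) (lam : Fin n → ℕ) (w : List ℤ) (J : Finset ℕ) (off : ℕ) : List ℤ :=
  applyAll w (selChain (lambdaChain n lam) (J.filter (fun x => x < off)))

/-- The filling map `f`, sending an (admissible) pair `(w, J)` to a filling of
the doubled shape `\hat λ`. -/
def fMap (n : ℕ) (lam : Fin n → ℕ) (w : List ℤ) (J : Finset ℕ) : Filling where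
  Cp := fun i k => if validP n lam i k
    then (piW n lam w J (offsetP n lam i k)).take (conj n lam i) else []
  Cu := fun i j => if validU n lam i j
    then (piW n lam w J (offsetU n lam i j)).take (conj n lam i) else []

/-! ### Content of a filling -/

/-- The columns `\bar{C}^i = C'_{i,2} C_{i,1}` (left to right, `i = λ_1, ..., 1`)
of the compressed filling `\barσ` of shape `2λ`; by the conventions,
`C'_{i,2} = C_{i,1}` when `λ'_i = 1`. -/
def compCols (n : ℕ) (lam : Fin n → ℕ) (F : Filling) : List (List ℤ) :=
  ((List.range (lamOne n lam)).map (fun t =>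
    [(if 2 ≤ conj n lam (lamOne n lam - t) then F.Cp (lamOne n lam - t) 2
      else F.Cu (lamOne n lam - t) 1), F.Cu (lamOne n lam - t) 1])).flatten

/-- The content of a list of columns: the `i`-th coordinate is half the
difference between the numbers of occurrences of `i` and of `-i`. -/
def ctCols (n : ℕ) (cols : List (List ℤ)) : Fin n → ℚ := fun r =>
  ((cols.flatten.count (((r : ℕ) + 1 : ℕ) : ℤ) : ℚ) -
    (cols.flatten.count (-(((r : ℕ) + 1 : ℕ) : ℤ)) : ℚ)) / 2

/-- The content `ct(σ)` of a filling `σ` of `\hatλ`. -/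
def ctQ (n : ℕ) (lam : Fin n → ℕ) (F : Filling) : Fin n → ℚ :=
  ctCols n (compCols n lam F)

/-! ### The statistics `N(D,C)` and `des(D,C)` -/

/-- `σ_{ab} = 1` if `a` and `b` are both negative, else `0`. -/
def sigmaAB (a b : ℤ) : ℕ := if a < 0 ∧ b < 0 then 1 else 0

def allEntries (n : ℕ) : List ℤ :=
  (List.range n).map (fun r => ((r + 1 : ℕ) : ℤ)) ++
    (List.range n).map (fun r => -((r + 1 : ℕ) : ℤ))

/-- Case 1: `N(D, D(r,-j)) = N_{\bar b, a}(D[r+1,j-1]) +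
#{c : \bar b ≺ c ≺ a, c ∉ ±D[1,j]} + σ_{ab}` where `a = D(r)`, `b = D(j)`. -/
def N1 (n : ℕ) (D : List ℤ) (r j : ℕ) : ℕ :=
  Nab (-(D.getD (j - 1) 0)) (D.getD (r - 1) 0) (word D (r + 1) (j - 1)) +
  ((allEntries n).filter (fun c => decide (slt (-(D.getD (j - 1) 0)) c ∧
    slt c (D.getD (r - 1) 0) ∧ c ∉ D.take j ∧ c ∉ (D.take j).map (fun x => -x)))).length +
  sigmaAB (D.getD (r - 1) 0) (D.getD (j - 1) 0)

/-- Case 2: `N(D, D(r_1,-j)⋯(r_p,-j)) = ∑ N(D_{t-1}, D_t)`. -/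
def cycleN (n : ℕ) : List ℤ → List ℕ → ℕ → ℕ
  | _, [], _ => 0
  | D, r :: rs, j => N1 n D r j + cycleN n (applyRefl D (r, -(j : ℤ))) rs j

/-- The possible values `(N(D,C), des(D,C))` arising from the case-by-case
definition of the statistics (cases 0, 2, 3; case 1 is case 2 with `p = 1`).
If `C` is one box taller than `D`, `C` is replaced by `C[1,d]`. -/
def NdesCand (n : ℕ) (D C : List ℤ) : Set (ℕ × ℕ) :=
  {x |
    (C.take D.length = D ∧ x = (0, 0)) ∨
    (∃ j R, sortedR R j D.length ∧ R ≠ [] ∧ C.take D.length = cycleApply D R j ∧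
      x = (cycleN n D R j, R.length)) ∨
    (∃ j R, sortedR R j D.length ∧
      (∀ r, 1 ≤ r → r ≤ D.length → r ≠ j →
        (C.take D.length).getD (r - 1) 0 = (cycleApply D R j).getD (r - 1) 0) ∧
      (∀ r, 1 ≤ r → r ≤ D.length → r ≠ j →
        (C.take D.length).getD (j - 1) 0 ≠ (cycleApply D R j).getD (r - 1) 0 ∧
        (C.take D.length).getD (j - 1) 0 ≠ -((cycleApply D R j).getD (r - 1) 0)) ∧
      slt ((C.take D.length).getD (j - 1) 0) ((cycleApply D R j).getD (j - 1) 0) ∧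
      x = (cycleN n D R j +
        Nab ((C.take D.length).getD (j - 1) 0) ((cycleApply D R j).getD (j - 1) 0)
          (word D (j + 1) D.length), R.length + 1))}

noncomputable def Nstat (n : ℕ) (D C : List ℤ) : ℕ :=
  sInf {v | ∃ d, (v, d) ∈ NdesCand n D C}

noncomputable def desStat (n : ℕ) (D C : List ℤ) : ℕ :=
  sInf {d | ∃ v, (v, d) ∈ NdesCand n D C}

/-- All columns of a filling of `\hatλ`, listed from left to right. -/
def colList (n : ℕ) (lam : Fin n → ℕ) (F : Filling) : List (List ℤ) :=
  ((List.range (lamOne n lam)).map (fun t =>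
    ((List.range (conj n lam (lamOne n lam - t) - 1)).map
      (fun s => F.Cp (lamOne n lam - t) (s + 2))) ++
    (if lamOne n lam - t = 1 then [F.Cu 1 1]
     else (List.range (conj n lam (lamOne n lam - t))).map
      (fun s => F.Cu (lamOne n lam - t) (s + 1))))).flatten

/-- Sum of a binary statistic over adjacent pairs of a list. -/
def adjSumN (f : List ℤ → List ℤ → ℕ) : List (List ℤ) → ℕ
  | a :: b :: rest => f a b + adjSumN f (b :: rest)
  | _ => 0

/-- `N(σ) = ∑_{i=1}^{m-1} N(C_{i+1}, C_i) + ℓ₊(C_1)`. -/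
noncomputable def Nsigma (n : ℕ) (lam : Fin n → ℕ) (F : Filling) : ℕ :=
  adjSumN (Nstat n) (colList n lam F) + lplus ((colList n lam F).getLastD [])

/-- `des(σ) = ∑_{i=1}^{m-1} des(C_{i+1}, C_i)`. -/
noncomputable def desSigma (n : ℕ) (lam : Fin n → ℕ) (F : Filling) : ℕ :=
  adjSumN (desStat n) (colList n lam F)

/-! ### Statistics on fillings of the plain shape `λ` (for Proposition 2.2) -/

/-- The descent statistic of a filling of the Young diagram of `λ`, whose
columns are listed from left to right. -/
def desTau (cols : List (List ℤ)) : ℕ :=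
  adjSumN (fun L R => ((Finset.range L.length).filter
    (fun r => slt (R.getD r 0) (L.getD r 0))).card) cols

/-- The complementary inversion statistic `cinv = n(λ) - inv` of a filling of
the Young diagram of `λ` (columns listed from left to right, `C_k` being the
`k`-th column from the right). -/
def cinvTau (cols : List (List ℤ)) : ℕ :=
  ∑ q ∈ Finset.range cols.length,
    (((Finset.range (cols.getD q []).length) ×ˢ (Finset.range (cols.getD q []).length)).filter
      (fun pp => pp.1 < pp.2 ∧
        (((1 ≤ q ∧ pp.2 < (cols.getD (q - 1) []).length) ∧
            slt ((cols.getD q []).getD pp.2 0) ((cols.getD q []).getD pp.1 0) ∧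
            slt ((cols.getD q []).getD pp.1 0) ((cols.getD (q - 1) []).getD pp.2 0)) ∨
          (¬ (1 ≤ q ∧ pp.2 < (cols.getD (q - 1) []).length) ∧
            slt ((cols.getD q []).getD pp.2 0) ((cols.getD q []).getD pp.1 0))))).card

/-! ### Chains for the root systems `C_n` and `B_n` and the conditions (R1), (R2) -/

def isPosRootC (n : ℕ) (β : ℕ × ℤ) : Prop :=
  (1 ≤ β.1 ∧ (β.1 : ℤ) < β.2 ∧ β.2 ≤ (n : ℤ)) ∨
  (1 ≤ β.1 ∧ 0 < -β.2 ∧ (β.1 : ℤ) ≤ -β.2 ∧ -β.2 ≤ (n : ℤ))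

/-- Positive roots of `B_n` use the same symbols; `(i,-i)` encodes `ε_i`. -/
def isPosRootB (n : ℕ) (β : ℕ × ℤ) : Prop := isPosRootC n β

/-- The root of type `B_n` of a symbol: as in type `C` except `(i,-i) ↦ ε_i`. -/
def rootVecB (n : ℕ) (β : ℕ × ℤ) : Fin n → ℤ :=
  if β.2 = -(β.1 : ℤ) then (fun r => if ((r : ℕ) + 1 : ℤ) = (β.1 : ℤ) then 1 else 0)
  else rootVec n β

/-- The coroot of type `B_n`: `ε_i^∨ = 2ε_i`, long roots unchanged. -/
def corootVecB (n : ℕ) (β : ℕ × ℤ) : Fin n → ℤ :=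
  if β.2 = -(β.1 : ℤ) then (fun r => if ((r : ℕ) + 1 : ℤ) = (β.1 : ℤ) then 2 else 0)
  else rootVec n β

/-- `ω_k` in type `C_n`. -/
def omegaC (n k : ℕ) : Fin n → ℤ := fun r => if (r : ℕ) + 1 ≤ k then 1 else 0

/-- `ω_k` in type `B_n` (`ω_n` is half the sum of the `ε_i`). -/
def omegaB (n k : ℕ) : Fin n → ℚ :=
  if k = n then (fun _ => 1/2) else (fun r => if (r : ℕ) + 1 ≤ k then 1 else 0)

/-- type `B`: `Γ'_j = ((1,-j),...,(j-1,-j),(j))`. -/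
def gammaPrimeB (j : ℕ) : List (ℕ × ℤ) := gammaPrime j ++ [(j, -(j : ℤ))]

/-- type `B`: `Γ(k) = Γ'_1 ⋯ Γ'_k Γ_1(k) ⋯ Γ_k(k)` for `k < n`, and
`Γ(n) = Γ'_1 ⋯ Γ'_n`. -/
def gammaChainB (n k : ℕ) : List (ℕ × ℤ) :=
  ((List.range k).map (fun r => gammaPrimeB (r + 1))).flatten
    ++ (if k = n then [] else ((List.range k).map (fun r => gammaJK n (r + 1) k)).flatten)

/-- `(R2)`: the subsequence of all occurrences of `α, β, γ` is a concatenation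
of consecutive pairs `(γ, α)` or `(γ, β)`. -/
def altPairs (g a b : ℕ × ℤ) : List (ℕ × ℤ) → Prop
  | [] => True
  | [_] => False
  | x :: y :: rest => x = g ∧ (y = a ∨ y = b) ∧ altPairs g a b rest

/-! ### Real vector space versions (for hyperplanes) -/

def ipR (n : ℕ) (u v : Fin n → ℝ) : ℝ := ∑ r, u r * v r

def affReflR (n : ℕ) (β : ℕ × ℤ) (c : ℝ) (v : Fin n → ℝ) : Fin n → ℝ :=
  fun r => v r - (ipR n v (fun s => ((corootVec n β s : ℤ) : ℝ)) - c) *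
    ((rootVec n β r : ℤ) : ℝ)

def wActR (n : ℕ) (w : List ℤ) (v : Fin n → ℝ) : Fin n → ℝ := fun r =>
  ∑ i : Fin n, ((if w.getD i 0 = ((r : ℕ) + 1 : ℤ) then v i else 0) +
    (if w.getD i 0 = -(((r : ℕ) + 1 : ℤ)) then -(v i) else 0))

/-- `γ^∨ = (2/⟨γ,γ⟩) γ`. -/
noncomputable def corootOfR (n : ℕ) (v : Fin n → ℝ) : Fin n → ℝ :=
  fun r => (2 / ipR n v v) * v r

/-- The part of the compressed filling of shape `2λ` consisting of the columns
numbered `2λ_1, 2λ_1 - 1, ..., q` (`\barσ[q]`); column `2i` is `C'_{i,2}` and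
column `2i-1` is `C_{i,1}`. -/
def compColsGe (n : ℕ) (lam : Fin n → ℕ) (F : Filling) (q : ℕ) : List (List ℤ) :=
  ((List.range (lamOne n lam)).map (fun t =>
    (if q ≤ 2 * (lamOne n lam - t) then
      [(if 2 ≤ conj n lam (lamOne n lam - t) then F.Cp (lamOne n lam - t) 2
        else F.Cu (lamOne n lam - t) 1)] else []) ++
    (if q ≤ 2 * (lamOne n lam - t) - 1 then [F.Cu (lamOne n lam - t) 1] else []))).flatten

/-! ### The chains `Δ` and `Φ` of Section 6 -/

/-- `Δ = ((1,p+1),...,(1,n),(1,-1),(1,-n),(1,-(n-1)),...,(1,-(p+1)))`. -/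
def deltaChain (n p : ℕ) : List (ℕ × ℤ) :=
  (List.range (n - p)).map (fun r => (1, ((p + 1 + r : ℕ) : ℤ)))
    ++ [(1, (-1 : ℤ))]
    ++ (List.range (n - p)).map (fun r => (1, -((n - r : ℕ) : ℤ)))

/-- The suffix `Δ_{\bar s}` of `Δ` beginning with `(1,-s)`. -/
def deltaSuffixNeg (p s : ℕ) : List (ℕ × ℤ) :=
  (List.range (s - p)).map (fun r => (1, -((s - r : ℕ) : ℤ)))

/-- The suffix `Δ_{\bar 1}` of `Δ` beginning with `(1,-1)`. -/
def deltaSuffixBar1 (n p : ℕ) : List (ℕ × ℤ) :=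
  [(1, (-1 : ℤ))] ++ (List.range (n - p)).map (fun r => (1, -((n - r : ℕ) : ℤ)))

/-- The suffix `Δ_s` of `Δ` beginning with `(1,s)` (for `p < s ≤ n`). -/
def deltaSuffixPos (n p s : ℕ) : List (ℕ × ℤ) :=
  (List.range (n + 1 - s)).map (fun r => (1, ((s + r : ℕ) : ℤ)))
    ++ [(1, (-1 : ℤ))]
    ++ (List.range (n - p)).map (fun r => (1, -((n - r : ℕ) : ℤ)))

/-- `Φ = ((1,-1),(1,-2),(2,-2),...,(1,-n),...,(n-1,-n),(n,-n))`. -/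
def phiChain (n : ℕ) : List (ℕ × ℤ) :=
  ((List.range n).map (fun jm =>
    (List.range (jm + 1)).map (fun im => (im + 1, -((jm + 1 : ℕ) : ℤ))))).flatten

/-- The suffix `Φ_{ij}` of `Φ` beginning with `(i,-j)`. -/
def phiSuffix (n i j : ℕ) : List (ℕ × ℤ) := (phiChain n).drop ((j - 1) * j / 2 + (i - 1))

/-- `ℓ^{ij}_-(w) = #{(k,l) : k ≤ l, (k,-l)` strictly precedes `(i,-j)` in `Φ`,
`w(k) ≻ -w(l)}`. -/
def lminusBefore (w : List ℤ) (i j : ℕ) : ℕ :=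
  (((Finset.range w.length) ×ˢ (Finset.range w.length)).filter
    (fun p => p.1 ≤ p.2 ∧ (p.2 + 1 < j ∨ (p.2 + 1 = j ∧ p.1 + 1 < i)) ∧
      slt (-(w.getD p.2 0)) (w.getD p.1 0))).card


/-! ### Comparing `w` with `w(i,-j)` pair by pair -/

/-- The indicator of `x ≺ y`. -/
def ind (x y : ℤ) : ℤ := if slt x y then 1 else 0

/-- Negation reverses the order `≺`. -/
lemma ind_neg (x y : ℤ) : ind (-x) (-y) = ind y x := by
  have : slt (-x) (-y) ↔ slt y x := by unfold slt; omega
  simp [ind, this]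

lemma ind_neg_left (x y : ℤ) : ind (-x) y = ind (-y) x := by
  simpa using ind_neg x (-y)

/-- `≺` is total on nonzero integers. -/
lemma ind_total {x y : ℤ} (hx : x ≠ 0) (hy : y ≠ 0) (h : x ≠ y) : ind x y + ind y x = 1 := by
  have : slt x y ↔ ¬ slt y x := by unfold slt; omega
  unfold ind
  split_ifs <;> tauto

/-- The contribution of the pair of positions `(k, l)` to `ℓ₊ + 2 ℓ^{ij}_- - ℓ_-`, for the window
`u` and the 0-based reflection `(I, -J)`. -/
def pairTerm (I J : ℕ) (u : ℕ → ℤ) (k l : ℕ) : ℤ :=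
  (if k < l then ind (u l) (u k) else 0) +
  (if k ≤ l then
    (if l < J ∨ (l = J ∧ k < I) then ind (-(u l)) (u k) else -ind (-(u l)) (u k)) else 0)

lemma signed_count (w : List ℤ) (I J : ℕ) :
    (lplus w : ℤ) + 2 * lminusBefore w (I + 1) (J + 1) - lminus w =
      ∑ k ∈ Finset.range w.length, ∑ l ∈ Finset.range w.length,
        pairTerm I J (fun k => w.getD k 0) k l := by
  rw [← Finset.sum_product']
  simp only [lplus, lminusBefore, lminus, Finset.card_filter, Nat.cast_sum, Finset.mul_sum,
    ← Finset.sum_add_distrib, ← Finset.sum_sub_distrib]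
  refine Finset.sum_congr rfl fun p _ => ?_
  simp only [pairTerm, ind, add_lt_add_iff_right, add_left_inj]
  split_ifs <;> first | rfl | (exfalso; tauto)

/-- If a double sum over `S × S` has vanishing terms away from `{I, J}`, and the terms joining
any `m ∈ S \ {I, J}` to `I` and `J` cancel, then only the pairs inside `{I, J}` remain. -/
lemma sum_pairs {S : Finset ℕ} {I J : ℕ} (hI : I ∈ S) (hJ : J ∈ S) (h : ℕ → ℕ → ℤ)
    (h0 : ∀ k ∈ S, ∀ l ∈ S, k ≠ I → k ≠ J → l ≠ I → l ≠ J → h k l = 0)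
    (hm : ∀ m ∈ S, m ≠ I → m ≠ J →
      ∑ p ∈ ({I, J} : Finset ℕ), (h m p + h p m) = 0) :
    ∑ k ∈ S, ∑ l ∈ S, h k l =
      ∑ k ∈ ({I, J} : Finset ℕ), ∑ l ∈ ({I, J} : Finset ℕ), h k l := by
  have hsub : ({I, J} : Finset ℕ) ⊆ S := by
    intro x hx; simp at hx; rcases hx with rfl | rfl <;> assumption
  have hmem : ∀ m ∈ S \ ({I, J} : Finset ℕ), m ∈ S ∧ m ≠ I ∧ m ≠ J := by
    intro m hm; simpa using hm
  set P : Finset ℕ := {I, J} with hP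
  have h1 : ∑ k ∈ S \ P, ∑ l ∈ S \ P, h k l = 0 :=
    Finset.sum_eq_zero fun k hk => Finset.sum_eq_zero fun l hl => by
      obtain ⟨a, b, c⟩ := hmem k hk
      obtain ⟨d, e, f⟩ := hmem l hl
      exact h0 k a l d b c e f
  have h2 : ∑ k ∈ S \ P, ∑ l ∈ P, h k l + ∑ k ∈ P, ∑ l ∈ S \ P, h k l = 0 := by
    rw [Finset.sum_comm (s := P), ← Finset.sum_add_distrib]
    refine Finset.sum_eq_zero fun m hm' => ?_
    obtain ⟨a, b, c⟩ := hmem m hm'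
    rw [← Finset.sum_add_distrib]
    exact hm m a b c
  have h3 : ∀ f : ℕ → ℤ, ∑ k ∈ S, f k = ∑ k ∈ S \ P, f k + ∑ k ∈ P, f k := fun f =>
    (Finset.sum_sdiff hsub).symm
  rw [h3]
  simp only [h3 (h _), Finset.sum_add_distrib]
  linarith

/-- The identity `F(w(i,-j)) = F(w) + 1`, for windows given as functions. -/
lemma signed_count_refl {n I J : ℕ} (hIJ : I ≤ J) (hJ : J < n) (u v : ℕ → ℤ)
    (hu0 : ∀ k < n, u k ≠ 0)
    (hu : ∀ k < n, ∀ l < n, k ≠ l → u k ≠ u l ∧ u k ≠ -u l)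
    (hvI : v I = -u J) (hvJ : v J = -u I) (hv : ∀ k, k ≠ I → k ≠ J → v k = u k)
    (hgt : slt (-(u J)) (u I)) :
    ∑ k ∈ Finset.range n, ∑ l ∈ Finset.range n, pairTerm I J v k l =
      ∑ k ∈ Finset.range n, ∑ l ∈ Finset.range n, pairTerm I J u k l + 1 := by
  have hI : I < n := by omega
  have a0 := hu0 I hI
  have b0 := hu0 J hJ
  have hab : ind (-(u J)) (u I) = 1 := by simp [ind, hgt]
  have hba : ind (u I) (-(u J)) = 0 := by
    have : ¬ slt (u I) (-(u J)) := by unfold slt at *; omega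
    simp [ind, this]
  have taa := ind_total (x := u I) (y := -(u I)) a0 (by omega) (by omega)
  have tbb := ind_total (x := u J) (y := -(u J)) b0 (by omega) (by omega)
  rw [← sub_eq_iff_eq_add', ← Finset.sum_sub_distrib]
  simp only [← Finset.sum_sub_distrib]
  rw [sum_pairs (I := I) (J := J) (by simpa using hI) (by simpa using hJ)]
  · rcases hIJ.eq_or_lt with rfl | hlt
    · simp only [Finset.pair_eq_singleton, Finset.sum_singleton, pairTerm, hvI]
      simp
      omega
    · rw [Finset.sum_pair hlt.ne, Finset.sum_pair hlt.ne, Finset.sum_pair hlt.ne]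
      have e1 := ind_neg (u I) (u J)
      simp only [pairTerm, hvI, hvJ, neg_neg]
      simp [hlt, hlt.le, hlt.not_ge, hlt.not_gt]
      omega
  · intro k _ l _ hkI hkJ hlI hlJ
    simp [pairTerm, hv k hkI hkJ, hv l hlI hlJ]
  · intro m hm hmI hmJ
    have hm : m < n := by simpa using hm
    have hvm := hv m hmI hmJ
    have e0 := hu0 m hm
    obtain ⟨n1, n2⟩ := hu m hm I hI hmI
    obtain ⟨n3, n4⟩ := hu m hm J hJ hmJ
    have t1 := ind_total e0 a0 n1
    have t2 := ind_total (x := u m) (y := -(u I)) e0 (by omega) n2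
    have t3 := ind_total e0 b0 n3
    have t4 := ind_total (x := u m) (y := -(u J)) e0 (by omega) n4
    have s1 := ind_neg_left (u m) (u I)
    have s2 := ind_neg_left (u m) (u J)
    have s3 := ind_neg (u m) (u I)
    have s4 := ind_neg (u m) (u J)
    rcases hIJ.eq_or_lt with rfl | hlt
    · simp only [Finset.pair_eq_singleton, Finset.sum_singleton, pairTerm, hvI, hvm, neg_neg]
      rcases lt_or_gt_of_ne hmI with h | h
      · simp [h, h.le, h.not_ge, h.not_gt]
        try omega
      · simp [h, h.le, h.not_ge, h.not_gt, h.ne']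
        omega
    · rw [Finset.sum_pair hlt.ne]
      simp only [pairTerm, hvI, hvJ, hvm, neg_neg]
      rcases lt_or_gt_of_ne hmI with h | h
      · have h' := h.trans hlt
        simp [h, h.le, h.not_ge, h.not_gt, h', h'.le, h'.not_ge, h'.not_gt, hlt]
        try omega
      · rcases lt_or_gt_of_ne hmJ with h' | h'
        · simp [h, h.le, h.not_ge, h.not_gt, h', h'.le, h'.not_ge, h'.not_gt]
          omega
        · simp [h, h.le, h.not_ge, h.not_gt, h', h'.le, h'.not_ge, h'.not_gt, hmJ]
          omega

lemma window_props {n : ℕ} {w : List ℤ} (hw : w ∈ allWindows n) :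
    w.length = n ∧ (∀ k < n, w.getD k 0 ≠ 0) ∧
      ∀ k < n, ∀ l < n, k ≠ l → w.getD k 0 ≠ w.getD l 0 ∧ w.getD k 0 ≠ -(w.getD l 0) := by
  simp only [allWindows, Finset.mem_image, Finset.mem_univ, true_and] at hw
  obtain ⟨⟨σ, ε⟩, rfl⟩ := hw
  have key : ∀ k (hk : k < n), ((List.finRange n).map (fun i =>
      if ε i then -(((σ i : ℕ) : ℤ) + 1) else ((σ i : ℕ) : ℤ) + 1)).getD k 0 =
      if ε ⟨k, hk⟩ then -(((σ ⟨k, hk⟩ : ℕ) : ℤ) + 1) else ((σ ⟨k, hk⟩ : ℕ) : ℤ) + 1 := by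
    intro k hk
    simp [List.getD_eq_getElem?_getD, hk]
  refine ⟨by simp, fun k hk => ?_, fun k hk l hl hkl => ?_⟩
  · rw [key k hk]; split_ifs <;> omega
  · rw [key k hk, key l hl]
    have : (σ ⟨k, hk⟩ : ℕ) ≠ σ ⟨l, hl⟩ := fun h => hkl (by
      simpa using σ.injective (Fin.ext h))
    split_ifs <;> omega

lemma applyRefl_length (w : List ℤ) (t : ℕ × ℤ) : (applyRefl w t).length = w.length := by
  unfold applyRefl; split_ifs <;> simp

/-- The entries of `w(i,-j)`; the description covers `i = j` as well. -/
lemma applyRefl_getD {w : List ℤ} {I J : ℕ} (hI : I < w.length) (hJ : J < w.length) (k : ℕ) :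
    (applyRefl w (I + 1, -((J + 1 : ℕ) : ℤ))).getD k 0 =
      if k = I then -(w.getD J 0) else if k = J then -(w.getD I 0) else w.getD k 0 := by
  have hneg : ¬ (0 : ℤ) < -((J + 1 : ℕ) : ℤ) := by omega
  have hnat : (- -((J + 1 : ℕ) : ℤ)).toNat = J + 1 := by omega
  simp only [applyRefl, if_neg hneg, hnat, Nat.add_sub_cancel, Nat.add_right_cancel_iff]
  simp only [List.getD_eq_getElem?_getD]
  by_cases hIJ : I = J
  · subst hIJ
    by_cases hk : k = I
    · subst hk; simp [hI]
    · simp [hk, Ne.symm hk]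
  · by_cases hk : k = I
    · subst hk; simp [hIJ, hI, Ne.symm hIJ]
    · by_cases hk' : k = J
      · subst hk'; simp [hIJ, hJ, hk]
      · simp [hIJ, hk, hk', Ne.symm hk, Ne.symm hk']

/-- the key length identity in the proof of Proposition 6.4:
`ℓ₊(w) + ℓ^{ij}_-(w) = ½(ℓ(w) - ℓ(w(i,-j)) - 1) + ℓ₊(w(i,-j)) + ℓ^{ij}_-(w(i,-j))`
whenever `w(i) ≻ -w(j)`. -/
theorem length_identity_phi (n i j : ℕ) (h1 : 1 ≤ i) (h2 : i ≤ j) (h3 : j ≤ n)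
    (w : List ℤ) (hw : w ∈ allWindows n)
    (hgt : slt (-(w.getD (j - 1) 0)) (w.getD (i - 1) 0)) :
    ((lplus w : ℚ) + (lminusBefore w i j : ℚ)) =
      ((len w : ℚ) - (len (applyRefl w (i, -(j : ℤ))) : ℚ) - 1) / 2 +
        (lplus (applyRefl w (i, -(j : ℤ))) : ℚ) +
        (lminusBefore (applyRefl w (i, -(j : ℤ))) i j : ℚ) := by
  obtain ⟨I, rfl⟩ : ∃ I, i = I + 1 := ⟨i - 1, by omega⟩
  obtain ⟨J, rfl⟩ : ∃ J, j = J + 1 := ⟨j - 1, by omega⟩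
  simp only [Nat.add_sub_cancel] at hgt
  obtain ⟨hlen, hw0, hwd⟩ := window_props hw
  have hget := applyRefl_getD (w := w) (I := I) (J := J) (by omega) (by omega)
  have hF := signed_count w I J
  have hF' := signed_count (applyRefl w (I + 1, -((J + 1 : ℕ) : ℤ))) I J
  rw [applyRefl_length] at hF'
  rw [hlen] at hF hF'
  have hstep := signed_count_refl (n := n) (I := I) (J := J) (by omega) (by omega)
    (fun k => w.getD k 0) (fun k => (applyRefl w (I + 1, -((J + 1 : ℕ) : ℤ))).getD k 0)
    hw0 hwd (by simp only [hget]; simp)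
    (by simp only [hget]; split_ifs with h <;> simp [h])
    (fun k hk hk' => by simp only [hget]; simp [hk, hk']) hgt
  rw [← hF, ← hF'] at hstep
  have hQ := congrArg (Int.cast : ℤ → ℚ) hstep
  push_cast at hQ
  unfold len
  push_cast
  linarith
end HL
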